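/- arXiv:1710.10040 — 6 statements merged into one kernel-verified Lean document; each statement's English description precedes it below -/
import Mathlib

section
/- Let t ∈ ℝ, let R_t = ((cos t, −sin t),(sin t, cos t)) ∈ SO(2), let k₂ ∈ SO(m), and set k = diag(R_t, k₂) ∈ M_{m+2}(ℝ). Then for all X ∈ 𝔪: A₀(kXk⁻¹) = cos(2t)·(k(A₀X)k⁻¹) + sin(2t)·J(k(A₀X)k⁻¹). Consequently, the circle of real structures 𝔄 = {cos θ·A₀ + sin θ·(J∘A₀) : θ ∈ ℝ} on 𝔪 is invariant under conjugation by every element of the isotropy group K = {diag(k₁,k₂) : k₁ ∈ SO(2), k₂ ∈ SO(m)}: for each k ∈ K and A ∈ 𝔄, the map X ↦ kA(k⁻¹Xk)k⁻¹ again belongs to 𝔄. -/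
open Matrix

lemma aux_inv {m : ℕ} (P P' : Matrix (Fin 2) (Fin 2) ℝ) (Q Q' : Matrix (Fin m) (Fin m) ℝ)
    (hP : P * P' = 1) (hQ : Q * Q' = 1) :
    (Matrix.fromBlocks P 0 0 Q)⁻¹ = Matrix.fromBlocks P' 0 0 Q' := by
  apply Matrix.inv_eq_right_inv
  simp [Matrix.fromBlocks_multiply, hP, hQ, Matrix.fromBlocks_one]

lemma aux_conj {m : ℕ} (P P' : Matrix (Fin 2) (Fin 2) ℝ) (Q Q' : Matrix (Fin m) (Fin m) ℝ)
    (B : Matrix (Fin 2) (Fin m) ℝ) (C : Matrix (Fin m) (Fin 2) ℝ) :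
    Matrix.fromBlocks P 0 0 Q * Matrix.fromBlocks 0 B C 0 * Matrix.fromBlocks P' 0 0 Q'
      = Matrix.fromBlocks 0 (P * B * Q') (Q * C * P') 0 := by
  simp [Matrix.fromBlocks_multiply]

lemma aux_form {m : ℕ} (X : Matrix (Fin 2 ⊕ Fin m) (Fin 2 ⊕ Fin m) ℝ)
    (s : Matrix (Fin 2 ⊕ Fin m) (Fin 2 ⊕ Fin m) ℝ)
    (hs : s = Matrix.fromBlocks (-1) 0 0 1)
    (h2 : s * X * s⁻¹ = -X) :
    ∃ B C, X = Matrix.fromBlocks 0 B C 0 := by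
  have hi : s⁻¹ = Matrix.fromBlocks (-1) 0 0 1 := by
    rw [hs]; exact aux_inv _ _ _ _ (by simp) (by simp)
  rw [hi, hs, ← Matrix.fromBlocks_toBlocks X] at h2
  simp only [Matrix.fromBlocks_multiply, Matrix.fromBlocks_neg, Matrix.fromBlocks_inj] at h2
  obtain ⟨h11, -, -, h22⟩ := h2
  simp at h11 h22
  refine ⟨X.toBlocks₁₂, X.toBlocks₂₁, ?_⟩
  conv_lhs => rw [← Matrix.fromBlocks_toBlocks X]
  have e1 : X.toBlocks₁₁ = 0 := by
    ext a b
    have := congrFun (congrFun h11 a) b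
    rw [Matrix.neg_apply] at this
    rw [Matrix.zero_apply]; linarith
  have e2 : X.toBlocks₂₂ = 0 := by
    ext a b
    have := congrFun (congrFun h22 a) b
    rw [Matrix.neg_apply] at this
    rw [Matrix.zero_apply]; linarith
  rw [e1, e2]

lemma aux_so2 (l : Matrix (Fin 2) (Fin 2) ℝ) (h : lᵀ * l = 1) (hd : l.det = 1) :
    ∃ u : ℝ, l = !![Real.cos u, -Real.sin u; Real.sin u, Real.cos u] := by
  have h00 := congrFun (congrFun h 0) 0
  have h01 := congrFun (congrFun h 0) 1
  have h11 := congrFun (congrFun h 1) 1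
  simp [Matrix.mul_apply, Fin.sum_univ_two] at h00 h01 h11
  rw [Matrix.det_fin_two] at hd
  have e1 : l 1 1 = l 0 0 := by
    linear_combination (-l 1 1) * h00 + l 1 0 * h01 + l 0 0 * hd
  have e2 : l 0 1 = - l 1 0 := by
    linear_combination (-l 0 1) * h00 + l 0 0 * h01 - l 1 0 * hd
  have hn : ‖(⟨l 0 0, l 1 0⟩ : ℂ)‖ = 1 := by
    rw [← sq_eq_sq₀ (norm_nonneg _) zero_le_one, ← Complex.normSq_eq_norm_sq, Complex.normSq_mk]
    linarith
  obtain ⟨u, hu⟩ := (Complex.norm_eq_one_iff _).mp hn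
  have hr := congrArg Complex.re hu
  have hi := congrArg Complex.im hu
  rw [Complex.exp_ofReal_mul_I_re] at hr
  rw [Complex.exp_ofReal_mul_I_im] at hi
  simp at hr hi
  refine ⟨u, ?_⟩
  ext a b
  fin_cases a <;> fin_cases b <;> simp [hr, hi, e1, e2]

/-- For `k = diag(R_t, k₂)` with `R_t ∈ SO(2)` the rotation by angle `t` and
`k₂ ∈ SO(m)`, one has `A₀(kXk⁻¹) = cos(2t)·(k(A₀X)k⁻¹) + sin(2t)·J(k(A₀X)k⁻¹)` for all
`X ∈ 𝔪`.  Consequently the circle of real structures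
`𝔄 = {cos θ·A₀ + sin θ·(J∘A₀) : θ ∈ ℝ}` on `𝔪` is invariant under conjugation by every
element of the isotropy group `K = SO(2)×SO(m)`: for each `k ∈ K` and each `A ∈ 𝔄` the map
`X ↦ kA(k⁻¹Xk)k⁻¹` again belongs to `𝔄`. -/
theorem stmt_6 (m : ℕ) (hm : 3 ≤ m)
    (s : Matrix (Fin 2 ⊕ Fin m) (Fin 2 ⊕ Fin m) ℝ)
    (hs : s = Matrix.fromBlocks (-1) 0 0 1)
    (mm : Set (Matrix (Fin 2 ⊕ Fin m) (Fin 2 ⊕ Fin m) ℝ))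
    (hmm : mm = {X | Xᵀ * s = -(s * X) ∧ s * X * s⁻¹ = -X})
    (j : Matrix (Fin 2 ⊕ Fin m) (Fin 2 ⊕ Fin m) ℝ)
    (hj : j = Matrix.fromBlocks !![0, 1; -1, 0] 0 0 1)
    (J : Matrix (Fin 2 ⊕ Fin m) (Fin 2 ⊕ Fin m) ℝ →
         Matrix (Fin 2 ⊕ Fin m) (Fin 2 ⊕ Fin m) ℝ)
    (hJ : ∀ X, J X = j * X * j⁻¹)
    (a₀ : Matrix (Fin 2 ⊕ Fin m) (Fin 2 ⊕ Fin m) ℝ)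
    (ha₀ : a₀ = Matrix.fromBlocks !![1, 0; 0, -1] 0 0 1)
    (A₀ : Matrix (Fin 2 ⊕ Fin m) (Fin 2 ⊕ Fin m) ℝ →
          Matrix (Fin 2 ⊕ Fin m) (Fin 2 ⊕ Fin m) ℝ)
    (hA₀ : ∀ X, A₀ X = a₀ * X * a₀⁻¹)
    (t : ℝ) (k₂ : Matrix (Fin m) (Fin m) ℝ) (hk₂ : k₂ᵀ * k₂ = 1) (hk₂det : k₂.det = 1)
    (k : Matrix (Fin 2 ⊕ Fin m) (Fin 2 ⊕ Fin m) ℝ)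
    (hk : k = Matrix.fromBlocks
      !![Real.cos t, -Real.sin t; Real.sin t, Real.cos t] 0 0 k₂) :
    -- the commutation relation A₀ ∘ Ad(k) = cos(2t)·Ad(k)∘A₀ + sin(2t)·J∘Ad(k)∘A₀
    (∀ X ∈ mm,
      A₀ (k * X * k⁻¹) =
        Real.cos (2 * t) • (k * (A₀ X) * k⁻¹) +
        Real.sin (2 * t) • J (k * (A₀ X) * k⁻¹)) ∧
    -- the circle 𝔄 of real structures is invariant under conjugation by every element of K
    (∀ θ : ℝ, ∀ l₁ : Matrix (Fin 2) (Fin 2) ℝ, l₁ᵀ * l₁ = 1 → l₁.det = 1 →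
      ∀ l₂ : Matrix (Fin m) (Fin m) ℝ, l₂ᵀ * l₂ = 1 → l₂.det = 1 →
      ∀ l : Matrix (Fin 2 ⊕ Fin m) (Fin 2 ⊕ Fin m) ℝ, l = Matrix.fromBlocks l₁ 0 0 l₂ →
      ∃ θ' : ℝ, ∀ X ∈ mm,
        l * (Real.cos θ • A₀ (l⁻¹ * X * l) + Real.sin θ • J (A₀ (l⁻¹ * X * l))) * l⁻¹ =
          Real.cos θ' • A₀ X + Real.sin θ' • J (A₀ X)) := by
  have hji : j⁻¹ = Matrix.fromBlocks !![0, -1; 1, 0] 0 0 1 := by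
    rw [hj]
    refine aux_inv _ _ _ _ ?_ (by simp)
    ext a b; fin_cases a <;> fin_cases b <;> simp
  have hai : a₀⁻¹ = Matrix.fromBlocks !![1, 0; 0, -1] 0 0 1 := by
    rw [ha₀]
    refine aux_inv _ _ _ _ ?_ (by simp)
    ext a b; fin_cases a <;> fin_cases b <;> simp
  have hli : ∀ (u : ℝ) (l₂ : Matrix (Fin m) (Fin m) ℝ), l₂ᵀ * l₂ = 1 →
      (Matrix.fromBlocks !![Real.cos u, -Real.sin u; Real.sin u, Real.cos u] 0 0 l₂)⁻¹ =
      Matrix.fromBlocks !![Real.cos u, Real.sin u; -Real.sin u, Real.cos u] 0 0 l₂ᵀ := by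
    intro u l₂ h
    refine aux_inv _ _ _ _ ?_ (mul_eq_one_comm.mp h)
    have := Real.cos_sq_add_sin_sq u
    ext a b; fin_cases a <;> fin_cases b <;> simp <;> linarith
  constructor
  · intro X hX
    rw [hmm] at hX
    obtain ⟨B, C, rfl⟩ := aux_form X s hs hX.2
    have hc := Real.cos_sq_add_sin_sq t
    simp only [hA₀, hJ, hji, hai]
    rw [hk, hli t k₂ hk₂, hj, ha₀]
    simp only [aux_conj, Matrix.fromBlocks_smul, Matrix.fromBlocks_add, Matrix.one_mul,
      Matrix.mul_one, smul_zero, add_zero, Matrix.fromBlocks_inj, true_and, and_true]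
    have k1 : !![1, 0; 0, -1] * !![Real.cos t, -Real.sin t; Real.sin t, Real.cos t] =
        Real.cos (2*t) • (!![Real.cos t, -Real.sin t; Real.sin t, Real.cos t] * !![1, 0; 0, -1])
        + Real.sin (2*t) • (!![0, 1; -1, 0] *
          (!![Real.cos t, -Real.sin t; Real.sin t, Real.cos t] * !![1, 0; 0, -1])) := by
      rw [Real.cos_two_mul, Real.sin_two_mul]
      ext a b; fin_cases a <;> fin_cases b <;> simp <;> grind
    have k2 : !![Real.cos t, Real.sin t; -Real.sin t, Real.cos t] * !![1, 0; 0, -1] =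
        Real.cos (2*t) • (!![1, 0; 0, -1] * !![Real.cos t, Real.sin t; -Real.sin t, Real.cos t])
        + Real.sin (2*t) • (!![1, 0; 0, -1] *
          !![Real.cos t, Real.sin t; -Real.sin t, Real.cos t] * !![0, -1; 1, 0]) := by
      rw [Real.cos_two_mul, Real.sin_two_mul]
      ext a b; fin_cases a <;> fin_cases b <;> simp <;> grind
    constructor
    · have := congrArg (fun M => M * B * k₂ᵀ) k1
      simpa only [Matrix.add_mul, Matrix.smul_mul, Matrix.mul_assoc] using this
    · have := congrArg (fun M => k₂ * C * M) k2
      simpa only [Matrix.mul_add, Matrix.mul_smul, Matrix.mul_assoc] using this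
  · intro θ l₁ hl₁ hd₁ l₂ hl₂ hd₂ l hl
    obtain ⟨u, rfl⟩ := aux_so2 l₁ hl₁ hd₁
    refine ⟨θ - 2 * u, ?_⟩
    intro X hX
    rw [hmm] at hX
    obtain ⟨B, C, rfl⟩ := aux_form X s hs hX.2
    have hc := Real.cos_sq_add_sin_sq u
    have hl₂' : l₂ * l₂ᵀ = 1 := mul_eq_one_comm.mp hl₂
    simp only [hA₀, hJ, hji, hai]
    rw [hl, hli u l₂ hl₂, hj, ha₀]
    simp only [aux_conj, Matrix.fromBlocks_smul, Matrix.fromBlocks_add, Matrix.one_mul,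
      Matrix.mul_one, smul_zero, add_zero, Matrix.fromBlocks_inj, true_and, and_true]
    have k1 : !![Real.cos u, -Real.sin u; Real.sin u, Real.cos u] *
        (Real.cos θ • (!![1, 0; 0, -1] * !![Real.cos u, Real.sin u; -Real.sin u, Real.cos u])
        + Real.sin θ • (!![0, 1; -1, 0] * (!![1, 0; 0, -1] *
          !![Real.cos u, Real.sin u; -Real.sin u, Real.cos u]))) =
        Real.cos (θ - 2*u) • !![1, 0; 0, -1]
        + Real.sin (θ - 2*u) • (!![0, 1; -1, 0] * !![1, 0; 0, -1]) := by
      rw [Real.cos_sub, Real.sin_sub, Real.cos_two_mul, Real.sin_two_mul]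
      ext a b; fin_cases a <;> fin_cases b <;> simp <;> grind
    have k2 : (Real.cos θ • (!![Real.cos u, -Real.sin u; Real.sin u, Real.cos u] * !![1, 0; 0, -1])
        + Real.sin θ • (!![Real.cos u, -Real.sin u; Real.sin u, Real.cos u] * !![1, 0; 0, -1] *
          !![0, -1; 1, 0])) * !![Real.cos u, Real.sin u; -Real.sin u, Real.cos u] =
        Real.cos (θ - 2*u) • !![1, 0; 0, -1]
        + Real.sin (θ - 2*u) • (!![1, 0; 0, -1] * !![0, -1; 1, 0]) := by
      rw [Real.cos_sub, Real.sin_sub, Real.cos_two_mul, Real.sin_two_mul]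
      ext a b; fin_cases a <;> fin_cases b <;> simp <;> grind
    constructor
    · have := congrArg (fun M => M * B) k1
      simpa only [Matrix.add_mul, Matrix.mul_add, Matrix.smul_mul, Matrix.mul_smul,
        Matrix.mul_assoc, hl₂', Matrix.mul_one] using this
    · have := congrArg (fun M => C * M) k2
      have e : ∀ M : Matrix (Fin m) (Fin 2) ℝ, l₂ * (l₂ᵀ * M) = M := by
        intro M; rw [← Matrix.mul_assoc, hl₂', Matrix.one_mul]
      simpa only [Matrix.add_mul, Matrix.mul_add, Matrix.smul_mul, Matrix.mul_smul,
        Matrix.mul_assoc, e] using this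
end

section
/- For all X, Y, Z ∈ 𝔪 the following matrix identity holds: −2[[X,Y],Z] = −g(Y,Z)X + g(X,Z)Y − g(JY,Z)JX + g(JX,Z)JY + 2g(JX,Y)JZ − g(A₀Y,Z)A₀X + g(A₀X,Z)A₀Y − g(JA₀Y,Z)J(A₀X) + g(JA₀X,Z)J(A₀Y). -/
open Matrix

def emb7 {m : ℕ} (x y : Fin m → ℝ) : Matrix (Fin 2 ⊕ Fin m) (Fin 2 ⊕ Fin m) ℝ :=
  Matrix.fromBlocks 0 (Matrix.of ![x, y]) (Matrix.of ![x, y])ᵀ 0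

lemma emb7_trace {m : ℕ} (x y z w : Fin m → ℝ) :
    (1 / 2) * ((emb7 z w)ᵀ * emb7 x y).trace = x ⬝ᵥ z + y ⬝ᵥ w := by
  simp only [emb7, Matrix.fromBlocks_transpose, Matrix.fromBlocks_multiply, Matrix.trace,
    Matrix.diag, Fintype.sum_sum_type, Matrix.fromBlocks_apply₁₁, Matrix.fromBlocks_apply₂₂]
  simp [Matrix.mul_apply, Fin.sum_univ_two, Finset.sum_add_distrib, Matrix.vecMul, dotProduct, mul_comm]
  ring

lemma emb7_conj {m : ℕ} (a b : Matrix (Fin 2) (Fin 2) ℝ) (hab : a * b = 1) (hb : aᵀ = b)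
    (x y : Fin m → ℝ) :
    (Matrix.fromBlocks a 0 0 1 * emb7 x y * (Matrix.fromBlocks a 0 0 1)⁻¹ :
      Matrix (Fin 2 ⊕ Fin m) (Fin 2 ⊕ Fin m) ℝ) =
    emb7 (a 0 0 • x + a 0 1 • y) (a 1 0 • x + a 1 1 • y) := by
  have hi : (Matrix.fromBlocks a 0 0 1 : Matrix (Fin 2 ⊕ Fin m) (Fin 2 ⊕ Fin m) ℝ)⁻¹
      = Matrix.fromBlocks b 0 0 1 := by
    apply Matrix.inv_eq_right_inv
    simp [Matrix.fromBlocks_multiply, hab]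
  rw [hi, ← hb]
  have h : a * Matrix.of ![x, y]
      = Matrix.of ![a 0 0 • x + a 0 1 • y, a 1 0 • x + a 1 1 • y] := by
    ext i k
    fin_cases i <;> simp [Matrix.mul_apply, Fin.sum_univ_two]
  simp [emb7, Matrix.fromBlocks_multiply, ← h, Matrix.transpose_mul]

lemma emb7_of_mem {m : ℕ} (X : Matrix (Fin 2 ⊕ Fin m) (Fin 2 ⊕ Fin m) ℝ)
    (h1 : Xᵀ * Matrix.fromBlocks (-1) 0 0 1 = -(Matrix.fromBlocks (-1) 0 0 1 * X))
    (h2 : Matrix.fromBlocks (-1) 0 0 1 * X * (Matrix.fromBlocks (-1) 0 0 1)⁻¹ = -X) :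
    ∃ x y, X = emb7 x y := by
  have hi : (Matrix.fromBlocks (-1) 0 0 1 : Matrix (Fin 2 ⊕ Fin m) (Fin 2 ⊕ Fin m) ℝ)⁻¹
      = Matrix.fromBlocks (-1) 0 0 1 := by
    apply Matrix.inv_eq_right_inv
    simp [Matrix.fromBlocks_multiply]
  rw [hi] at h2
  obtain ⟨A, B, C, D, rfl⟩ : ∃ A B C D, X = Matrix.fromBlocks A B C D :=
    ⟨_, _, _, _, (Matrix.fromBlocks_toBlocks X).symm⟩
  simp only [Matrix.fromBlocks_transpose, Matrix.fromBlocks_multiply, Matrix.fromBlocks_neg,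
    Matrix.fromBlocks_inj] at h1 h2
  obtain ⟨-, h, -, -⟩ := h1
  obtain ⟨hA, -, -, hD⟩ := h2
  simp at h hA hD
  have hA' : A = 0 := by
    ext i k
    have := congrFun (congrFun hA i) k
    simp at this ⊢
    linarith
  have hD' : D = 0 := by
    ext i k
    have := congrFun (congrFun hD i) k
    simp at this ⊢
    linarith
  have hB : B = Matrix.of ![B 0, B 1] := by
    ext i k
    fin_cases i <;> rfl
  have hC : C = Bᵀ := by rw [← h, Matrix.transpose_transpose]
  refine ⟨B 0, B 1, ?_⟩
  rw [emb7, ← hB, hA', hD', hC]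

lemma emb7_add {m : ℕ} (x y z w : Fin m → ℝ) :
    emb7 x y + emb7 z w = emb7 (x + z) (y + w) := by
  ext (i | i) (k | k) <;> simp [emb7]
  · fin_cases i <;> simp
  · fin_cases k <;> simp

lemma emb7_smul {m : ℕ} (c : ℝ) (x y : Fin m → ℝ) :
    c • emb7 x y = emb7 (c • x) (c • y) := by
  ext (i | i) (k | k) <;> simp [emb7]
  · fin_cases i <;> simp
  · fin_cases k <;> simp

lemma emb7_sub {m : ℕ} (x y z w : Fin m → ℝ) :
    emb7 x y - emb7 z w = emb7 (x - z) (y - w) := by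
  ext (i | i) (k | k) <;> simp [emb7]
  · fin_cases i <;> simp
  · fin_cases k <;> simp

lemma gram7 {m : ℕ} (x y z w : Fin m → ℝ) :
    Matrix.of ![x, y] * (Matrix.of ![z, w])ᵀ = !![x ⬝ᵥ z, x ⬝ᵥ w; y ⬝ᵥ z, y ⬝ᵥ w] := by
  ext i k
  fin_cases i <;> fin_cases k <;> simp [Matrix.mul_apply, dotProduct]

lemma emb7_triple {m : ℕ} (x y z w u v : Fin m → ℝ) :
    emb7 x y * emb7 z w * emb7 u v =
      emb7 ((x ⬝ᵥ z) • u + (x ⬝ᵥ w) • v) ((y ⬝ᵥ z) • u + (y ⬝ᵥ w) • v) +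
      Matrix.fromBlocks 0 0 ((Matrix.of ![x, y])ᵀ * !![z ⬝ᵥ u, z ⬝ᵥ v; w ⬝ᵥ u, w ⬝ᵥ v]
        - (Matrix.of ![(x ⬝ᵥ z) • u + (x ⬝ᵥ w) • v, (y ⬝ᵥ z) • u + (y ⬝ᵥ w) • v])ᵀ) 0 := by
  have h : !![x ⬝ᵥ z, x ⬝ᵥ w; y ⬝ᵥ z, y ⬝ᵥ w] * Matrix.of ![u, v] =
      Matrix.of ![(x ⬝ᵥ z) • u + (x ⬝ᵥ w) • v, (y ⬝ᵥ z) • u + (y ⬝ᵥ w) • v] := by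
    ext i k
    fin_cases i <;> simp [Matrix.mul_apply, Fin.sum_univ_two]
  have k : (Matrix.of ![x, y])ᵀ * Matrix.of ![z, w] * (Matrix.of ![u, v])ᵀ =
      (Matrix.of ![x, y])ᵀ * !![z ⬝ᵥ u, z ⬝ᵥ v; w ⬝ᵥ u, w ⬝ᵥ v] := by
    rw [Matrix.mul_assoc, gram7]
  simp only [emb7, Matrix.fromBlocks_multiply, Matrix.fromBlocks_add, gram7, zero_mul, mul_zero,
    Matrix.zero_mul, Matrix.mul_zero, add_zero, zero_add, h, k, add_sub_cancel]

/-- For all `X, Y, Z ∈ 𝔪` the matrix identity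
`−2[[X,Y],Z] = −g(Y,Z)X + g(X,Z)Y − g(JY,Z)JX + g(JX,Z)JY + 2g(JX,Y)JZ − g(A₀Y,Z)A₀X
+ g(A₀X,Z)A₀Y − g(JA₀Y,Z)J(A₀X) + g(JA₀X,Z)J(A₀Y)` holds. -/
theorem stmt_7 (m : ℕ) (hm : 3 ≤ m)
    (s : Matrix (Fin 2 ⊕ Fin m) (Fin 2 ⊕ Fin m) ℝ)
    (hs : s = Matrix.fromBlocks (-1) 0 0 1)
    (mm : Set (Matrix (Fin 2 ⊕ Fin m) (Fin 2 ⊕ Fin m) ℝ))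
    (hmm : mm = {X | Xᵀ * s = -(s * X) ∧ s * X * s⁻¹ = -X})
    (g : Matrix (Fin 2 ⊕ Fin m) (Fin 2 ⊕ Fin m) ℝ →
         Matrix (Fin 2 ⊕ Fin m) (Fin 2 ⊕ Fin m) ℝ → ℝ)
    (hg : ∀ X Y, g X Y = (1 / 2) * (Yᵀ * X).trace)
    (j : Matrix (Fin 2 ⊕ Fin m) (Fin 2 ⊕ Fin m) ℝ)
    (hj : j = Matrix.fromBlocks !![0, 1; -1, 0] 0 0 1)
    (J : Matrix (Fin 2 ⊕ Fin m) (Fin 2 ⊕ Fin m) ℝ →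
         Matrix (Fin 2 ⊕ Fin m) (Fin 2 ⊕ Fin m) ℝ)
    (hJ : ∀ X, J X = j * X * j⁻¹)
    (a₀ : Matrix (Fin 2 ⊕ Fin m) (Fin 2 ⊕ Fin m) ℝ)
    (ha₀ : a₀ = Matrix.fromBlocks !![1, 0; 0, -1] 0 0 1)
    (A₀ : Matrix (Fin 2 ⊕ Fin m) (Fin 2 ⊕ Fin m) ℝ →
          Matrix (Fin 2 ⊕ Fin m) (Fin 2 ⊕ Fin m) ℝ)
    (hA₀ : ∀ X, A₀ X = a₀ * X * a₀⁻¹) :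
    ∀ X ∈ mm, ∀ Y ∈ mm, ∀ Z ∈ mm,
      (-2 : ℝ) • ((X * Y - Y * X) * Z - Z * (X * Y - Y * X)) =
        -(g Y Z) • X + (g X Z) • Y
        - (g (J Y) Z) • J X + (g (J X) Z) • J Y + (2 * g (J X) Y) • J Z
        - (g (A₀ Y) Z) • A₀ X + (g (A₀ X) Z) • A₀ Y
        - (g (J (A₀ Y)) Z) • J (A₀ X) + (g (J (A₀ X)) Z) • J (A₀ Y) := by
  subst hs hmm hj ha₀
  rintro X ⟨hX1, hX2⟩ Y ⟨hY1, hY2⟩ Z ⟨hZ1, hZ2⟩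
  obtain ⟨x, x', rfl⟩ := emb7_of_mem X hX1 hX2
  obtain ⟨y, y', rfl⟩ := emb7_of_mem Y hY1 hY2
  obtain ⟨z, z', rfl⟩ := emb7_of_mem Z hZ1 hZ2
  have eJ : ∀ p q : Fin m → ℝ, J (emb7 p q) = emb7 q (-p) := by
    intro p q
    rw [hJ, emb7_conj _ !![0, -1; 1, 0]]
    · simp
    · ext i k; fin_cases i <;> fin_cases k <;> simp
    · ext i k; fin_cases i <;> fin_cases k <;> simp
  have eA : ∀ p q : Fin m → ℝ, A₀ (emb7 p q) = emb7 p (-q) := by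
    intro p q
    rw [hA₀, emb7_conj _ !![1, 0; 0, -1]]
    · simp
    · ext i k; fin_cases i <;> fin_cases k <;> simp
    · ext i k; fin_cases i <;> fin_cases k <;> simp
  have eg : ∀ p q r t : Fin m → ℝ, g (emb7 p q) (emb7 r t) = p ⬝ᵥ r + q ⬝ᵥ t := by
    intro p q r t
    rw [hg, emb7_trace]
  simp only [eJ, eA, eg]
  simp only [sub_mul, mul_sub, ← mul_assoc, emb7_triple, neg_dotProduct]
  have c1 := dotProduct_comm y x
  have c2 := dotProduct_comm y x'
  have c3 := dotProduct_comm y' x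
  have c4 := dotProduct_comm y' x'
  have c5 := dotProduct_comm z x
  have c6 := dotProduct_comm z x'
  have c7 := dotProduct_comm z' x
  have c8 := dotProduct_comm z' x'
  have c9 := dotProduct_comm z y
  have c10 := dotProduct_comm z y'
  have c11 := dotProduct_comm z' y
  have c12 := dotProduct_comm z' y'
  simp only [c1, c2, c3, c4, c5, c6, c7, c8, c9, c10, c11, c12]
  ext (i | i) (k | k)
  · simp [emb7]
  · fin_cases i <;> simp [emb7] <;> ring
  · fin_cases k <;> simp [emb7, Matrix.mul_apply, Fin.sum_univ_two] <;> ring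
  · simp [emb7]
end

section
/- (Lemma 4.1(i).) Let A be a conjugation on V and let N ∈ V be a unit vector with AN = N. Set T = {X ∈ V : g(X,N) = 0}, and let 𝒬 denote the maximal 𝔄-invariant subspace of T, i.e. the sum of all real-linear subspaces W ⊆ T with iW ⊆ W and AW ⊆ W (equivalently, the largest subspace of T invariant under every conjugation λA with λ ∈ ℂ, |λ| = 1). Then 𝒬 = 𝒞, where 𝒞 = {X ∈ V : ⟨X,N⟩ = 0} is the maximal complex subspace of T. -/
/-- Lemma 4.1(i): Let `A` be a conjugation on `V` and `N` a unit vector with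
`AN = N`.  Let `T = {X | g(X,N) = 0}` and let `𝒬` be the maximal `𝔄`-invariant subspace of
`T`, i.e. the sum (supremum) of all real-linear subspaces `W ⊆ T` with `iW ⊆ W` and
`AW ⊆ W`.  Then `𝒬 = 𝒞 = {X | ⟨X,N⟩ = 0}`, the maximal complex subspace of `T`. -/
theorem stmt_9 {V : Type*} [NormedAddCommGroup V] [InnerProductSpace ℂ V]
    [FiniteDimensional ℂ V]
    (g : V → V → ℝ) (hg : ∀ v w, g v w = (@inner ℂ V _ v w).re)
    (A : V →ₗ[ℝ] V)
    (hA₁ : ∀ v, A (Complex.I • v) = -(Complex.I • A v))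
    (hA₂ : ∀ v, A (A v) = v)
    (hA₃ : ∀ v w, g (A v) (A w) = g v w)
    (N : V) (hN : ‖N‖ = 1) (hAN : A N = N)
    (T : Set V) (hT : T = {X | g X N = 0})
    (Q : Submodule ℝ V)
    (hQ : Q = sSup {W : Submodule ℝ V | (W : Set V) ⊆ T ∧
      (∀ v ∈ W, Complex.I • v ∈ W) ∧ (∀ v ∈ W, A v ∈ W)}) :
    (Q : Set V) = {X | (@inner ℂ V _ X N) = 0} := by
  have hI : ∀ v : V, (@inner ℂ V _ (Complex.I • v) N).re = (@inner ℂ V _ v N).im := by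
    intro v
    rw [inner_smul_left]
    simp
  let C : Submodule ℝ V :=
    { carrier := {X | (@inner ℂ V _ X N) = 0}
      add_mem' := by
        intro a b ha hb
        simp only [Set.mem_setOf_eq] at ha hb ⊢
        rw [inner_add_left, ha, hb, add_zero]
      zero_mem' := by simp
      smul_mem' := by
        intro c x hx
        simp only [Set.mem_setOf_eq] at hx ⊢
        rw [← Complex.coe_smul, inner_smul_left, hx, mul_zero] }
  have hC : ∀ X, X ∈ C ↔ (@inner ℂ V _ X N) = 0 := fun X => Iff.rfl
  have hQC : Q = C := by
    rw [hQ]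
    apply le_antisymm
    · apply sSup_le
      rintro W ⟨hW, hWI, -⟩ v hv
      have h1 := hW hv
      have h2 := hW (hWI v hv)
      rw [hT, Set.mem_setOf_eq, hg] at h1 h2
      rw [hI] at h2
      rw [hC]
      exact Complex.ext h1 h2
    · apply le_sSup
      refine ⟨?_, ?_, ?_⟩
      · intro v hv
        have hv' : (@inner ℂ V _ v N) = 0 := hv
        rw [hT, Set.mem_setOf_eq, hg, hv', Complex.zero_re]
      · intro v hv
        rw [hC] at hv ⊢
        rw [inner_smul_left, hv, mul_zero]
      · intro v hv
        rw [hC] at hv ⊢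
        have h1 := hA₃ v N
        have h2 := hA₃ (Complex.I • v) N
        rw [hAN, hg, hg] at h1 h2
        rw [hA₁, inner_neg_left, Complex.neg_re, hI, hI, hv] at h2
        rw [hv] at h1
        refine Complex.ext h1 ?_
        simpa using h2
  rw [hQC]
  rfl
end

section
/- (Lemma 4.1(ii).) Let A be a conjugation on V, let t ∈ (0, π/4], and let X₀, Y₀ ∈ V(A) be orthonormal (with respect to g). Set N = cos(t)·X₀ + sin(t)·iY₀ (a unit vector), T = {X ∈ V : g(X,N) = 0}, and let 𝒬 denote the maximal 𝔄-invariant subspace of T, i.e. the sum of all real-linear subspaces W ⊆ T with iW ⊆ W and AW ⊆ W. Then 𝒬 = {X ∈ V : ⟨X,N⟩ = 0 and ⟨X, iX₀ + Y₀⟩ = 0}; that is, 𝒬 = 𝒞 ⊖ ℂ(JX₀ + Y₀), the complex orthogonal complement of ℂ(iX₀+Y₀) inside the maximal complex subspace 𝒞 = {X : ⟨X,N⟩ = 0} of T. -/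
/-- Lemma 4.1(ii): Let `A` be a conjugation on `V`, `t ∈ (0, π/4]`, and
`X₀, Y₀ ∈ V(A)` orthonormal.  Set `N = cos(t)X₀ + sin(t)iY₀`, `T = {X | g(X,N) = 0}`, and
let `𝒬` be the maximal `𝔄`-invariant subspace of `T` (the sum of all real subspaces
`W ⊆ T` with `iW ⊆ W` and `AW ⊆ W`).  Then
`𝒬 = {X | ⟨X,N⟩ = 0 ∧ ⟨X, iX₀ + Y₀⟩ = 0} = 𝒞 ⊖ ℂ(iX₀ + Y₀)`. -/
theorem stmt_10 {V : Type*} [NormedAddCommGroup V] [InnerProductSpace ℂ V]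
    [FiniteDimensional ℂ V]
    (g : V → V → ℝ) (hg : ∀ v w, g v w = (@inner ℂ V _ v w).re)
    (A : V →ₗ[ℝ] V)
    (hA₁ : ∀ v, A (Complex.I • v) = -(Complex.I • A v))
    (hA₂ : ∀ v, A (A v) = v)
    (hA₃ : ∀ v w, g (A v) (A w) = g v w)
    (t : ℝ) (ht : t ∈ Set.Ioc 0 (Real.pi / 4))
    (X₀ Y₀ : V) (hX₀ : A X₀ = X₀) (hY₀ : A Y₀ = Y₀)
    (hX₀n : g X₀ X₀ = 1) (hY₀n : g Y₀ Y₀ = 1) (hXY : g X₀ Y₀ = 0)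
    (N : V) (hN : N = Real.cos t • X₀ + Real.sin t • (Complex.I • Y₀))
    (T : Set V) (hT : T = {X | g X N = 0})
    (Q : Submodule ℝ V)
    (hQ : Q = sSup {W : Submodule ℝ V | (W : Set V) ⊆ T ∧
      (∀ v ∈ W, Complex.I • v ∈ W) ∧ (∀ v ∈ W, A v ∈ W)}) :
    (Q : Set V) = {X | (@inner ℂ V _ X N) = 0 ∧
      (@inner ℂ V _ X (Complex.I • X₀ + Y₀)) = 0} := by
  have hs : 0 < Real.sin t := Real.sin_pos_of_pos_of_lt_pi ht.1 (by linarith [ht.2, Real.pi_pos])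
  have hc : 0 < Real.cos t := Real.cos_pos_of_mem_Ioo
    ⟨by linarith [ht.1, Real.pi_pos], by linarith [ht.2, Real.pi_pos]⟩
  have hI : ∀ X v : V, inner ℂ (Complex.I • X) v = -(Complex.I * inner ℂ X v) := by
    intro X v
    rw [inner_smul_left]; simp
  have hre : ∀ X v : V, A v = v → (inner ℂ (A X) v).re = (inner ℂ X v).re := by
    intro X v hv
    have h := hA₃ X v
    rwa [hv, hg, hg] at h
  have him : ∀ X v : V, A v = v → (inner ℂ (A X) v).im = -(inner ℂ X v).im := by
    intro X v hv
    have h := hre (Complex.I • X) v hv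
    rw [hA₁, inner_neg_left, hI, hI] at h
    simp at h
    linarith
  have hNX : ∀ X : V, inner ℂ X N = (Real.cos t : ℂ) * inner ℂ X X₀
      + (Real.sin t : ℂ) * (Complex.I * inner ℂ X Y₀) := by
    intro X
    rw [hN, inner_add_right, ← Complex.coe_smul, ← Complex.coe_smul, inner_smul_right,
      inner_smul_right, inner_smul_right]
  have hPX : ∀ X : V, inner ℂ X (Complex.I • X₀ + Y₀) = Complex.I * inner ℂ X X₀
      + inner ℂ X Y₀ := by
    intro X
    rw [inner_add_right, inner_smul_right]
  have hNr : ∀ X : V, (inner ℂ X N).re = Real.cos t * (inner ℂ X X₀).re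
      - Real.sin t * (inner ℂ X Y₀).im := by
    intro X
    rw [hNX, Complex.add_re, Complex.re_ofReal_mul, Complex.re_ofReal_mul, Complex.I_mul_re]
    ring
  let S : Submodule ℝ V :=
    { carrier := {X | inner ℂ X X₀ = 0 ∧ inner ℂ X Y₀ = 0}
      add_mem' := by
        rintro a b ⟨h1, h2⟩ ⟨h3, h4⟩
        simp [inner_add_left, h1, h2, h3, h4]
      zero_mem' := by simp
      smul_mem' := by
        rintro r a ⟨h1, h2⟩
        simp only [Set.mem_setOf_eq]
        rw [← Complex.coe_smul, inner_smul_left, inner_smul_left, h1, h2]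
        simp }
  have hmem : ∀ X, X ∈ S ↔ inner ℂ X X₀ = 0 ∧ inner ℂ X Y₀ = 0 := fun X => Iff.rfl
  have hQS : Q = S := by
    rw [hQ]
    apply le_antisymm
    · apply sSup_le
      rintro W ⟨hWT, hWI, hWA⟩ X hX
      have key : ∀ Z ∈ W, (inner ℂ Z X₀).re = 0 ∧ (inner ℂ Z Y₀).im = 0 := by
        intro Z hZ
        have h1 := hWT hZ
        have h2 := hWT (hWA Z hZ)
        rw [hT, Set.mem_setOf_eq, hg, hNr] at h1 h2
        rw [hre _ _ hX₀, him _ _ hY₀] at h2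
        constructor
        · have : Real.cos t * (inner ℂ Z X₀).re = 0 := by linarith
          exact (mul_eq_zero.1 this).resolve_left hc.ne'
        · have : Real.sin t * (inner ℂ Z Y₀).im = 0 := by linarith
          exact (mul_eq_zero.1 this).resolve_left hs.ne'
      obtain ⟨a, b⟩ := key X hX
      obtain ⟨c, d⟩ := key _ (hWI X hX)
      rw [hI] at c d
      simp at c d
      exact ⟨Complex.ext a c, Complex.ext d b⟩
    · apply le_sSup
      refine ⟨?_, ?_, ?_⟩
      · rintro X ⟨h1, h2⟩
        rw [hT, Set.mem_setOf_eq, hg, hNr, h1, h2]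
        simp
      · rintro X ⟨h1, h2⟩
        rw [hmem, hI, hI, h1, h2]
        simp
      · rintro X ⟨h1, h2⟩
        refine ⟨Complex.ext ?_ ?_, Complex.ext ?_ ?_⟩
        · rw [hre _ _ hX₀, h1]
        · rw [him _ _ hX₀, h1]; simp
        · rw [hre _ _ hY₀, h2]
        · rw [him _ _ hY₀, h2]; simp
  rw [hQS]
  ext X
  rw [SetLike.mem_coe, hmem, Set.mem_setOf_eq, hNX, hPX]
  constructor
  · rintro ⟨h1, h2⟩
    simp [h1, h2]
  · rintro ⟨h1, h2⟩
    have hy : inner ℂ X Y₀ = -(Complex.I * inner ℂ X X₀) := by linear_combination h2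
    have h3 : ((Real.cos t + Real.sin t : ℝ) : ℂ) * inner ℂ X X₀ = 0 := by
      rw [hy] at h1
      push_cast at h1 ⊢
      linear_combination h1 + Complex.sin t * inner ℂ X X₀ * Complex.I_mul_I
    have h4 : inner ℂ X X₀ = 0 := by
      refine (mul_eq_zero.1 h3).resolve_left ?_
      exact_mod_cast (add_pos hc hs).ne'
    exact ⟨h4, by rw [hy, h4]; simp⟩
end

section
/- (Lemma 5.2, pointwise form.) Let A be a conjugation on V and suppose the unit vector N has the adapted form N = cos(t)·Z₁ + sin(t)·iZ₂ for some t ∈ ℝ and orthonormal Z₁, Z₂ ∈ V(A). Let α, k ∈ ℝ and let S : T → T be a g-self-adjoint linear map with Sξ = αξ, with φ(SX) + S(φX) = k·φX for all X ∈ T, and satisfying, for all X, Y ∈ T: 0 = 2g(SφSX, Y) − α·g((φS + Sφ)X, Y) + 2g(φX, Y) − 2g(X,AN)g(Y,Aξ) + 2g(Y,AN)g(X,Aξ) − 2g(ξ,Aξ)[g(Y,AN)η(X) − g(X,AN)η(Y)]. Then for all X ∈ T: 2S²X = [η(X)(2α² − αk − 2) − 2(g(φX,AN)η(Aξ) − η(AN)g(φX,Aξ))]·ξ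 + 2k·SX − (αk − 2)·X + g(φX,AN)·(Aξ)^T − g(φX,Aξ)·(AN)^T + g(φX,Aξ)·(iAξ)^T − (g(X,Aξ) − η(X)η(Aξ))·(Aξ)^T. -/
/-- Lemma 5.2, pointwise form: Let `A` be a conjugation on `V` and let the
unit vector `N` have the adapted form `N = cos(t)Z₁ + sin(t)iZ₂` with `Z₁, Z₂ ∈ V(A)`
orthonormal.  Let `S : T → T` be `g`-self-adjoint with `Sξ = αξ`, `φS + Sφ = kφ` on `T`,
and satisfying the identity of Lemma 4.2.  Then for all `X ∈ T`:
`2S²X = [η(X)(2α² − αk − 2) − 2(g(φX,AN)η(Aξ) − η(AN)g(φX,Aξ))]ξ + 2kSX − (αk−2)X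
+ g(φX,AN)(Aξ)^T − g(φX,Aξ)(AN)^T + g(φX,Aξ)(iAξ)^T − (g(X,Aξ) − η(X)η(Aξ))(Aξ)^T`. -/
theorem stmt_18 {V : Type*} [NormedAddCommGroup V] [InnerProductSpace ℂ V]
    [FiniteDimensional ℂ V]
    (g : V → V → ℝ) (hg : ∀ v w, g v w = (@inner ℂ V _ v w).re)
    (A : V →ₗ[ℝ] V)
    (hA₁ : ∀ v, A (Complex.I • v) = -(Complex.I • A v))
    (hA₂ : ∀ v, A (A v) = v)
    (hA₃ : ∀ v w, g (A v) (A w) = g v w)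
    (t : ℝ) (Z₁ Z₂ : V) (hZ₁ : A Z₁ = Z₁) (hZ₂ : A Z₂ = Z₂)
    (hZ₁n : g Z₁ Z₁ = 1) (hZ₂n : g Z₂ Z₂ = 1) (hZ₁₂ : g Z₁ Z₂ = 0)
    (N : V) (hNform : N = Real.cos t • Z₁ + Real.sin t • (Complex.I • Z₂))
    (hN : ‖N‖ = 1)
    (ξ : V) (hξ : ξ = -(Complex.I • N))
    (η : V → ℝ) (hη : ∀ X, η X = g X ξ)
    (φ : V → V) (hφ : ∀ X, φ X = Complex.I • X - g (Complex.I • X) N • N)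
    (tang : V → V) (htang : ∀ v, tang v = v - g v N • N)
    (α k : ℝ)
    (S : V →ₗ[ℝ] V)
    -- S maps T = {X | g(X,N) = 0} into itself
    (hST : ∀ X, g X N = 0 → g (S X) N = 0)
    -- S is g-self-adjoint on T
    (hSsym : ∀ X Y, g X N = 0 → g Y N = 0 → g (S X) Y = g X (S Y))
    (hSξ : S ξ = α • ξ)
    -- the contact condition φS + Sφ = kφ on T
    (hcontact : ∀ X, g X N = 0 → φ (S X) + S (φ X) = k • φ X)
    -- the identity of Lemma 4.2
    (hlem42 : ∀ X Y, g X N = 0 → g Y N = 0 →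
      0 = 2 * g (S (φ (S X))) Y - α * g (φ (S X) + S (φ X)) Y + 2 * g (φ X) Y
        - 2 * g X (A N) * g Y (A ξ) + 2 * g Y (A N) * g X (A ξ)
        - 2 * g ξ (A ξ) * (g Y (A N) * η X - g X (A N) * η Y)) :
    ∀ X, g X N = 0 →
      (2 : ℝ) • S (S X) =
        (η X * (2 * α ^ 2 - α * k - 2)
          - 2 * (g (φ X) (A N) * η (A ξ) - η (A N) * g (φ X) (A ξ))) • ξ
        + (2 * k) • S X - (α * k - 2) • X
        + g (φ X) (A N) • tang (A ξ) - g (φ X) (A ξ) • tang (A N)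
        + g (φ X) (A ξ) • tang (Complex.I • A ξ)
        - (g X (A ξ) - η X * η (A ξ)) • tang (A ξ) := by
  have ga : ∀ u v w, g (u + v) w = g u w + g v w := by
    intro u v w; simp [hg, inner_add_left]
  have gs : ∀ u v w, g (u - v) w = g u w - g v w := by
    intro u v w; simp [hg, inner_sub_left]
  have gn : ∀ u w, g (-u) w = - g u w := by
    intro u w; simp [hg]
  have gc : ∀ (r : ℝ) u w, g (r • u) w = r * g u w := by
    intro r u w
    rw [hg, hg, ← Complex.coe_smul, inner_smul_left]; simp
  have gsy : ∀ u v, g u v = g v u := by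
    intro u v
    rw [hg, hg, ← inner_conj_symm, Complex.conj_re]
  have gI : ∀ u v, g (Complex.I • u) v = - g u (Complex.I • v) := by
    intro u v
    rw [hg, hg, inner_smul_left, inner_smul_right]; simp
  have ga' : ∀ u v w, g w (u + v) = g w u + g w v := by
    intro u v w; rw [gsy, ga, gsy u, gsy v]
  have gs' : ∀ u v w, g w (u - v) = g w u - g w v := by
    intro u v w; rw [gsy, gs, gsy u, gsy v]
  have gn' : ∀ u w, g w (-u) = - g w u := by
    intro u w; rw [gsy, gn, gsy u]
  have gc' : ∀ (r : ℝ) u w, g w (r • u) = r * g w u := by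
    intro r u w; rw [gsy, gc, gsy u]
  have II : ∀ u : V, Complex.I • (Complex.I • u) = -u := by
    intro u; rw [smul_smul]; simp
  have Ic : ∀ (r : ℝ) (u : V), Complex.I • (r • u) = r • (Complex.I • u) := by
    intro r u; exact smul_comm _ _ _
  have g0 : ∀ u, g u u = 0 → u = 0 := by
    intro u hu
    rw [hg] at hu
    have h := inner_self_eq_norm_sq (𝕜 := ℂ) u
    simp only [RCLike.re_to_complex] at h
    rw [hu] at h
    exact norm_eq_zero.1 (pow_eq_zero_iff (two_ne_zero) |>.1 h.symm)
  have gNN : g N N = 1 := by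
    rw [hg]
    have h := inner_self_eq_norm_sq (𝕜 := ℂ) N
    simp only [RCLike.re_to_complex] at h
    rw [h, hN]; norm_num
  have gII : ∀ u, g u (Complex.I • u) = 0 := by
    intro u
    have := gI u u
    rw [gsy] at this; linarith
  have gZ : ∀ u v, A u = u → A v = v → g u (Complex.I • v) = 0 := by
    intro u v hu hv
    have := hA₃ u (Complex.I • v)
    rw [hA₁, hu, hv, gn'] at this; linarith
  have gZ' : ∀ u v, A u = u → A v = v → g (Complex.I • v) u = 0 := by
    intro u v hu hv
    rw [gsy]; exact gZ u v hu hv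
  have AN : A N = Real.cos t • Z₁ - Real.sin t • (Complex.I • Z₂) := by
    rw [hNform, map_add, map_smul, map_smul, hA₁, hZ₁, hZ₂]; simp [sub_eq_add_neg]
  have hξ2 : ξ = Real.sin t • Z₂ - Real.cos t • (Complex.I • Z₁) := by
    rw [hξ, hNform, smul_add, Ic, Ic, II, smul_neg]; abel
  have hANξ : g (A N) ξ = 0 := by
    rw [AN, hξ2]
    simp only [gs, gs', gc, gc', gI, II, gn', gZ Z₁ Z₁ hZ₁ hZ₁, gZ Z₂ Z₂ hZ₂ hZ₂, hZ₁₂, gsy Z₂ Z₁]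
    simp
  have Aξ : A ξ = Complex.I • A N := by
    rw [hξ, map_neg, hA₁, neg_neg]
  have IAξ : Complex.I • A ξ = - A N := by rw [Aξ, II]
  have gξN : g ξ N = 0 := by rw [hξ, gn, gsy, gII, neg_zero]
  have gξξ : g ξ ξ = 1 := by rw [hξ, gn, gn', gI, II, gn', gNN]; norm_num
  have hAξN : g (A ξ) N = 0 := by
    rw [Aξ, gI, ← gn', ← hξ, hANξ]
  have hAξξ : g (A ξ) ξ = - g (A N) N := by
    rw [Aξ, hξ, gn', gI, II, gn']; ring
  have hIN : ∀ X, g (Complex.I • X) N = η X := by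
    intro X; rw [gI, hη, hξ, gn']
  have hφN : ∀ X, g (φ X) N = 0 := by
    intro X; rw [hφ, gs, gc, gNN]; ring
  have hφξ : ∀ X, g X N = 0 → η (φ X) = 0 := by
    intro X hX
    rw [hη, hφ, gs, gc, gsy N, gξN, hξ, gn', gI, II, gn', hX]; simp
  have hφφ : ∀ X, g X N = 0 → φ (φ X) = - X + η X • ξ := by
    intro X hX
    rw [hφ (φ X), hIN, hφξ X hX, hφ, hIN, smul_sub, II, Ic, hξ]; simp [sub_eq_add_neg]
  intro X hX
  have hSφ : S (φ (S (φ X))) = k • S (φ (φ X)) - S (S (φ (φ X))) := by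
    have h := hcontact (φ X) (hφN X)
    rw [eq_sub_of_add_eq h, map_sub, map_smul]
  have hSSξ : S (S ξ) = (α * α) • ξ := by rw [hSξ, map_smul, hSξ, smul_smul]
  have hφAN : g (φ X) (A N) = - g X (A ξ) + η X * η (A ξ) := by
    rw [hφ, hIN, gs, gc, gI, ← Aξ, hη (A ξ), hAξξ, gsy N]; ring
  have htI : tang (Complex.I • A ξ) = - tang (A N) := by
    rw [IAξ, htang, htang, gn]; module
  have htN : ∀ v, g (tang v) N = 0 := by
    intro v; rw [htang, gs, gc, gNN]; ring
  have htY : ∀ v Y, g Y N = 0 → g (tang v) Y = g Y v := by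
    intro v Y hY; rw [htang, gs, gc, gsy N, hY, gsy]; ring
  have hξA : g ξ (A ξ) = η (A ξ) := by rw [gsy, hη]
  have hηAN : η (A N) = 0 := by rw [hη, hANξ]
  rw [← sub_eq_zero]
  have hTN := hST X hX
  have hTTN := hST _ hTN
  have fin : ∀ D : V, g D N = 0 → (∀ Y, g Y N = 0 → g D Y = 0) → D = 0 :=
    fun D h1 h2 => g0 D (h2 D h1)
  refine fin _ ?_ ?_
  · simp only [ga, gs, gc, htN, hX, hTN, hTTN, gξN]; ring
  · intro Y hY
    have h := hlem42 (φ X) Y (hφN X) hY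
    rw [hcontact _ (hφN X), hSφ, hφφ X hX, hφξ X hX, hξA] at h
    simp only [map_add, map_neg, map_smul, hSSξ, hSξ, gs, gc, ga, gn, smul_smul] at h
    rw [htI]
    simp only [ga, gs, gc, gn, htY _ Y hY, hηAN]
    have e : g X (A ξ) - η X * η (A ξ) = - g (φ X) (A N) := by rw [hφAN]; ring
    rw [e]
    have e2 : g ξ Y = η Y := by rw [hη, gsy]
    rw [e2] at h ⊢
    linear_combination -h
end

section
/- (Lemma 5.4, pointwise form.) Let dim_ℂ V = m ≥ 2, let A be a conjugation on V, let N ∈ V be a unit vector, and let (E₁, …, E_{2m−1}) be an orthonormal basis of T with respect to g. Let C : T × T × T → ℝ be trilinear, symmetric in its last two arguments (C(U,Y,Z) = C(U,Z,Y)), and satisfy the Codazzi identity: for all X, Y, Z ∈ T, C(X,Y,Z) − C(Y,X,Z) = −η(X)g(φY,Z) + η(Y)g(φX,Z) + 2η(Z)g(φX,Y) − g(X,AN)g(AY,Z) + g(Y,AN)g(AX,Z) − g(X,Aξ)g(iAY,Z) + g(Y,Aξ)g(iAX,Z). Then for every X ∈ T: Σ_{i=1}^{2m−1} C(E_i, φE_i,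 X) = Σ_{i=1}^{2m−1} C(X, E_i, φE_i) + 2(m−1)η(X) − g(AX,Aξ) − g(AX,ξ)g(AN,N) + g(ξ,AN)g(AX,N) − g(AX,Aξ) + g(AX,N)g(N,Aξ) + η(Aξ)g(AX,ξ) + g(X,Aξ)·(Tr_ℝ(A) − g(AN,N) − η(Aξ)), where Tr_ℝ(A) = Σ_{i=1}^{2m−1} g(AE_i,E_i) + g(AN,N) is the trace of A as a real-linear endomorphism of V. -/
/-- Lemma 5.4, pointwise form: Let `dim_ℂ V = m ≥ 2`, `A` a conjugation on
`V`, `N` a unit vector, `(E₁, …, E_{2m−1})` a `g`-orthonormal basis of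
`T = {X | g(X,N) = 0}`, and `C : T×T×T → ℝ` trilinear, symmetric in its last two arguments
and satisfying the Codazzi identity.  Then for every `X ∈ T`:
`Σᵢ C(Eᵢ, φEᵢ, X) = Σᵢ C(X, Eᵢ, φEᵢ) + 2(m−1)η(X) − g(AX,Aξ) − g(AX,ξ)g(AN,N)
+ g(ξ,AN)g(AX,N) − g(AX,Aξ) + g(AX,N)g(N,Aξ) + η(Aξ)g(AX,ξ)
+ g(X,Aξ)(Tr_ℝ(A) − g(AN,N) − η(Aξ))`,
where `Tr_ℝ(A) = Σᵢ g(AEᵢ,Eᵢ) + g(AN,N)`. -/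
theorem stmt_19 {V : Type*} [NormedAddCommGroup V] [InnerProductSpace ℂ V]
    [FiniteDimensional ℂ V]
    (m : ℕ) (hm : 2 ≤ m) (hdim : Module.finrank ℂ V = m)
    (g : V → V → ℝ) (hg : ∀ v w, g v w = (@inner ℂ V _ v w).re)
    (A : V →ₗ[ℝ] V)
    (hA₁ : ∀ v, A (Complex.I • v) = -(Complex.I • A v))
    (hA₂ : ∀ v, A (A v) = v)
    (hA₃ : ∀ v w, g (A v) (A w) = g v w)
    (N : V) (hN : ‖N‖ = 1)
    (ξ : V) (hξ : ξ = -(Complex.I • N))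
    (η : V → ℝ) (hη : ∀ X, η X = g X ξ)
    (φ : V → V) (hφ : ∀ X, φ X = Complex.I • X - g (Complex.I • X) N • N)
    (E : Fin (2 * m - 1) → V)
    (hET : ∀ i, g (E i) N = 0)
    (hEorth : ∀ i j, g (E i) (E j) = if i = j then 1 else 0)
    (hEspan : ∀ X, g X N = 0 → X ∈ Submodule.span ℝ (Set.range E))
    (trA : ℝ) (htrA : trA = (∑ i, g (A (E i)) (E i)) + g (A N) N)
    (C : V →ₗ[ℝ] V →ₗ[ℝ] V →ₗ[ℝ] ℝ)
    -- C is symmetric in its last two arguments (on T)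
    (hCsym : ∀ U Y Z, g U N = 0 → g Y N = 0 → g Z N = 0 → C U Y Z = C U Z Y)
    -- the Codazzi identity (on T)
    (hCodazzi : ∀ X Y Z, g X N = 0 → g Y N = 0 → g Z N = 0 →
      C X Y Z - C Y X Z =
        -η X * g (φ Y) Z + η Y * g (φ X) Z + 2 * η Z * g (φ X) Y
        - g X (A N) * g (A Y) Z + g Y (A N) * g (A X) Z
        - g X (A ξ) * g (Complex.I • A Y) Z + g Y (A ξ) * g (Complex.I • A X) Z) :
    ∀ X, g X N = 0 →
      (∑ i, C (E i) (φ (E i)) X) =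
        (∑ i, C X (E i) (φ (E i))) + 2 * ((m : ℝ) - 1) * η X
        - g (A X) (A ξ) - g (A X) ξ * g (A N) N + g ξ (A N) * g (A X) N
        - g (A X) (A ξ) + g (A X) N * g N (A ξ) + η (A ξ) * g (A X) ξ
        + g X (A ξ) * (trA - g (A N) N - η (A ξ)) := by
  intro X hX
  have hsymm : ∀ v w, g v w = g w v := by
    intro v w
    rw [hg, hg, ← inner_conj_symm, Complex.conj_re]
  have hadd : ∀ u v w, g (u + v) w = g u w + g v w := by
    intro u v w; simp [hg, inner_add_left]
  have hsub : ∀ u v w, g (u - v) w = g u w - g v w := by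
    intro u v w; simp [hg, inner_sub_left]
  have hsub' : ∀ u v w, g w (u - v) = g w u - g w v := by
    intro u v w; simp [hg, inner_sub_right]
  have hneg : ∀ u w, g (-u) w = - g u w := by
    intro u w; simp [hg]
  have hneg' : ∀ u w, g w (-u) = - g w u := by
    intro u w; simp [hg]
  have hsm : ∀ (r : ℝ) u w, g (r • u) w = r * g u w := by
    intro r u w
    rw [← Complex.coe_smul r u, hg, hg, inner_smul_left]; simp
  have hsm' : ∀ (r : ℝ) u w, g w (r • u) = r * g w u := by
    intro r u w
    rw [hsymm, hsm, hsymm]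
  have hJ : ∀ u w, g (Complex.I • u) w = - g u (Complex.I • w) := by
    intro u w; simp [hg, inner_smul_left, inner_smul_right]
  have hJJ : ∀ u w, g (Complex.I • u) (Complex.I • w) = g u w := by
    intro u w; simp [hg, inner_smul_left, inner_smul_right]
  have hNN : g N N = 1 := by
    have := inner_self_eq_norm_sq (𝕜 := ℂ) N
    rw [hN] at this
    rw [hg]; simpa using this
  have hAs : ∀ u w, g (A u) w = g u (A w) := by
    intro u w
    rw [← hA₃ u (A w), hA₂]
  have hξN : g ξ N = 0 := by
    have h1 := hJ N N
    have h2 := hsymm (Complex.I • N) N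
    rw [hξ, hneg]; linarith
  have hJN : ∀ u, g (Complex.I • u) N = g u ξ := by
    intro u; rw [hJ, hξ, hneg']
  have hJξ : ∀ u, g (Complex.I • u) ξ = - g u N := by
    intro u; rw [hξ, hneg', hJJ]
  have hξξ : g ξ ξ = 1 := by
    rw [hξ, hneg, hneg', hJJ, hNN]; ring
  have hspan : ∀ u, u ∈ Submodule.span ℝ (Set.range E) →
      ∀ w, ∑ i, g (E i) u * g (E i) w = g u w := by
    intro u hu w
    induction hu using Submodule.span_induction with
    | mem x hx =>
      obtain ⟨j, rfl⟩ := hx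
      simp [hEorth]
    | zero => simp [hg]
    | add x y _ _ hx hy =>
      rw [hadd, ← hx, ← hy, ← Finset.sum_add_distrib]
      refine Finset.sum_congr rfl fun i _ => ?_
      rw [hsymm _ (x + y), hadd, hsymm x, hsymm y]; ring
    | smul r x _ hx =>
      rw [hsm, ← hx, Finset.mul_sum]
      refine Finset.sum_congr rfl fun i _ => ?_
      rw [hsm']; ring
  have P : ∀ v w, ∑ i, g (E i) v * g (E i) w = g v w - g v N * g w N := by
    intro v w
    have h := hspan (v - g v N • N) (hEspan _ (by rw [hsub, hsm, hNN]; ring)) w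
    rw [hsub, hsm, hsymm N w] at h
    rw [← h]
    refine Finset.sum_congr rfl fun i _ => ?_
    rw [hsub', hsm', hET]; ring
  have Pf : ∑ i, g (A (E i)) (Complex.I • E i) = g (A N) ξ := by
    have h1 : ∀ i, g (A (E i)) (Complex.I • E i) =
        ∑ j, g (E j) (A (E i)) * g (E j) (Complex.I • E i) + g (E i) (A N) * g (E i) ξ := by
      intro i
      rw [P, hJN, hAs (E i) N]; ring
    have h2 : ∑ i, ∑ j, g (E j) (A (E i)) * g (E j) (Complex.I • E i) = 0 := by
      have h3 : ∑ i, ∑ j, g (E j) (A (E i)) * g (E j) (Complex.I • E i)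
          = - ∑ i, ∑ j, g (E j) (A (E i)) * g (E j) (Complex.I • E i) := by
        conv_lhs => rw [Finset.sum_comm]
        rw [← Finset.sum_neg_distrib]
        refine Finset.sum_congr rfl fun i _ => ?_
        rw [← Finset.sum_neg_distrib]
        refine Finset.sum_congr rfl fun j _ => ?_
        rw [← hAs (E i), hsymm (A (E i)), hsymm (E i) (Complex.I • E j), hJ]; ring
      linarith
    rw [Finset.sum_congr rfl fun i _ => h1 i, Finset.sum_add_distrib, h2, P, hξN]; ring
  have hφN : ∀ u, g (φ u) N = 0 := by
    intro u; rw [hφ, hsub, hsm, hNN]; ring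
  have hwφ : ∀ w u, g w (φ u) = g w (Complex.I • u) - g u ξ * g w N := by
    intro w u; rw [hφ, hsub', hsm', hJN]
  have hpt : ∀ i, C (E i) (φ (E i)) X = C X (E i) (φ (E i))
      + (- (g (E i) ξ * g (E i) X) + g X ξ + g X ξ * (g (E i) ξ * g (E i) ξ)
          - g X ξ * (g (E i) ξ * g (E i) ξ)
        + g X ξ * (g (E i) ξ * g (E i) ξ) - g X ξ * (g (E i) ξ * g (E i) ξ)
        - g X ξ * (g (E i) ξ * g (E i) ξ) + g X ξ * (g (E i) ξ * g (E i) ξ)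
        + g (E i) (A N) * g (E i) (Complex.I • A X)
        + g (A X) N * (g (E i) (A N) * g (E i) ξ)
        + g X (A N) * g (A (E i)) (Complex.I • E i)
        - g X (A N) * (g (E i) ξ * g (E i) (A N))
        - g (E i) (A ξ) * g (E i) (A X)
        + g (A X) ξ * (g (E i) (A ξ) * g (E i) ξ)
        + g X (A ξ) * g (A (E i)) (E i)
        - g X (A ξ) * (g (E i) ξ * g (E i) (A ξ))) := by
    intro i
    have h := hCodazzi (E i) X (φ (E i)) (hET i) hX (hφN _)
    rw [hCsym _ _ _ (hET i) (hφN _) hX]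
    have e0 : ∀ u, g (φ u) (φ (E i)) = g u (E i) - g u ξ * g (E i) ξ := by
      intro u
      rw [hwφ, hφN, hφ, hsub, hsm, hJJ, hJN, hsymm N, hJN]; ring
    have e1 : η (φ (E i)) = 0 := by
      rw [hη, hφ, hsub, hsm, hJξ, hET, hsymm N, hξN]; ring
    have e2 : g (A X) (φ (E i)) = - g (E i) (Complex.I • A X) - g (E i) ξ * g (A X) N := by
      rw [hwφ, hsymm (A X) (Complex.I • E i), hJ]
    have e3 : g (A (E i)) (φ (E i)) = g (A (E i)) (Complex.I • E i)
        - g (E i) ξ * g (E i) (A N) := by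
      rw [hwφ, hAs (E i) N]
    have e4 : g (Complex.I • A X) (φ (E i)) = g (E i) (A X) - g (E i) ξ * g (A X) ξ := by
      rw [hwφ, hJJ, hJN, hsymm (A X) (E i)]
    have e5 : g (Complex.I • A (E i)) (φ (E i)) = g (A (E i)) (E i)
        - g (E i) ξ * g (E i) (A ξ) := by
      rw [hwφ, hJJ, hJN, hAs (E i) ξ]
    rw [e0, e0, e1, e2, e3, e4, e5, hη, hη, hEorth, if_pos rfl, hsymm X (E i)] at h
    linear_combination h
  rw [Finset.sum_congr rfl fun i _ => hpt i]
  simp only [Finset.sum_add_distrib, Finset.sum_sub_distrib, Finset.sum_neg_distrib,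
    ← Finset.mul_sum, P, Pf, Finset.sum_const, Finset.card_univ, Fintype.card_fin, nsmul_eq_mul]
  have hc : ((2 * m - 1 : ℕ) : ℝ) = 2 * m - 1 := by
    rw [Nat.cast_sub (by omega)]; push_cast; ring
  have k1 : g (A N) (Complex.I • A X) = - g (A X) (A ξ) := by
    rw [hξ, map_neg, hA₁, neg_neg, hsymm (A N), hJ]
  have k2 : g (A ξ) N = g (A N) ξ := by rw [hAs, hsymm]
  rw [hc, k1, htrA, hη, hη, hJN, hξN, hξξ, hX, hsymm ξ X, hsymm ξ (A N), hsymm N (A ξ), k2,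
    hsymm (A ξ) (A X)]
  try rw [hsymm ξ (A ξ)]
  ring
end
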